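/- Let G be a finitely presented group with non-trivial finite residual R_G. Let s₁,…,s_m be non-trivial elements of G contained in R_G, and let H be the normal closure in G of S = {s₁,…,s_m}. Then rdef(G/H) ≥ rdef(G) − relsize(S;G,R_G). -/

import Mathlib

/-!
Every presentation of `G` yields one of `G ⧸ H` by adding, for each `i`, a relator `v ^ e`
representing `s i`, where `v` is not a proper power. If `v` maps to a root of `s i` whose order
modulo `R_G` is nearly maximal, this relator costs nearly `ν(s i)⁻¹`
(`exists_approx_root`, `exists_root`). Since `H ≤ R_G`, the finite residual of `G ⧸ H` is `R_G / H`,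
so orders modulo the finite residual do not change on passing to `G ⧸ H` (`orderIn_mk`). Hence each
value `x` of a presentation of `G` gives a value at least `x - relsize - ε` of a presentation of
`G ⧸ H` (`exists_mem_rdefSet_quotient`).

As `rdef` is a real supremum, with junk value `0` for unbounded or empty sets, the set of values for
`G` must be shown to be non-empty (`rdefSet_nonempty`) and the one for `G ⧸ H` to be bounded above.
The values for a group with `d` generators are bounded by `d` (`value_le`): in a finite quotient `Q`
in which the `u i` keep their orders `k i`, the derivations of the free group with coefficients in
the functions `Q → ℚ` form a space of dimension `n|Q|`. Each relator imposes at most `|Q| / k i`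
linear conditions for a derivation to descend to `G`, and the derivations which descend form a space
of dimension at most `d|Q|`.
-/

open scoped Classical ENNReal

namespace ResDef

variable {G : Type*} [Group G]

/-- The order of the image of `x` in `G ⧸ H`: the least positive `j` with `x ^ j ∈ H`,
or `0` if there is no such `j`. -/
noncomputable def orderIn (H : Subgroup G) (x : G) : ℕ :=
  sInf {j : ℕ | 0 < j ∧ x ^ j ∈ H}

/-- The finite residual: the intersection of all finite index subgroups. -/
def finiteResidual (G : Type*) [Group G] : Subgroup G :=
  ⨅ (H : Subgroup G) (_ : H.index ≠ 0), H

/-- An element of a free group is not a proper power. -/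
def NotProperPower {α : Type*} (u : FreeGroup α) : Prop :=
  ∀ (v : FreeGroup α) (k : ℕ), u = v ^ k → k = 1

/-- `G` admits a finite presentation. -/
def FinitelyPresentedGroup (G : Type*) [Group G] : Prop :=
  ∃ (n : ℕ) (R : Finset (FreeGroup (Fin n))) (φ : FreeGroup (Fin n) →* G),
    Function.Surjective φ ∧ φ.ker = Subgroup.normalClosure (R : Set (FreeGroup (Fin n)))

/-- The deficiency of a finitely presented group. -/
noncomputable def deficiency (G : Type*) [Group G] : ℝ :=
  sSup {x : ℝ | ∃ (n : ℕ) (R : Finset (FreeGroup (Fin n))) (φ : FreeGroup (Fin n) →* G),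
    Function.Surjective φ ∧ φ.ker = Subgroup.normalClosure (R : Set (FreeGroup (Fin n))) ∧
    x = (n : ℝ) - (R.card : ℝ)}

/-- The residual deficiency of a finitely presented group. -/
noncomputable def rdef (G : Type*) [Group G] : ℝ :=
  sSup {x : ℝ | ∃ (n s : ℕ) (u : Fin s → FreeGroup (Fin n)) (m : Fin s → ℕ)
    (φ : FreeGroup (Fin n) →* G),
    (∀ i, 1 ≤ m i) ∧ (∀ i, NotProperPower (u i)) ∧ Function.Surjective φ ∧
    φ.ker = Subgroup.normalClosure (Set.range fun i => u i ^ m i) ∧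
    x = (n : ℝ) - ∑ i, ((orderIn (finiteResidual G) (φ (u i)) : ℝ))⁻¹}

/-- The deficiency gradient. -/
noncomputable def DG (G : Type*) [Group G] : ℝ :=
  sSup {x : ℝ | ∃ H : Subgroup G, H.index ≠ 0 ∧
    x = (deficiency H - 1) / (H.index : ℝ)}

/-- `ν_p(r)`: the largest `k` such that `r = s ^ (p ^ k)` for some `s`. -/
noncomputable def nuP (p : ℕ) {α : Type*} (r : FreeGroup α) : ℕ :=
  sSup {k : ℕ | ∃ s : FreeGroup α, r = s ^ (p ^ k)}

/-- The `p`-deficiency of a group. -/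
noncomputable def defP (p : ℕ) (G : Type*) [Group G] : ℝ :=
  sSup {x : ℝ | ∃ (n : ℕ) (R : Set (FreeGroup (Fin n))) (φ : FreeGroup (Fin n) →* G),
    Function.Surjective φ ∧ φ.ker = Subgroup.normalClosure R ∧
    Summable (fun r : R => ((p : ℝ) ^ (nuP p r.1))⁻¹) ∧
    x = (n : ℝ) - ∑' r : R, ((p : ℝ) ^ (nuP p r.1))⁻¹}

/-- The `p`-deficiency gradient. -/
noncomputable def DGp (p : ℕ) (G : Type*) [Group G] : ℝ :=
  sSup {x : ℝ | ∃ H : Subgroup G, H.Normal ∧ H.index ≠ 0 ∧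
    x = (defP p H - 1) / (H.index : ℝ)}

/-- The rank (minimal number of generators) of a group. -/
noncomputable def grpRank (G : Type*) [Group G] : ℕ :=
  sInf {n : ℕ | ∃ S : Finset G, S.card = n ∧ Subgroup.closure (S : Set G) = ⊤}

/-- The rank gradient. -/
noncomputable def RG (G : Type*) [Group G] : ℝ :=
  sInf {x : ℝ | ∃ H : Subgroup G, H.index ≠ 0 ∧
    x = ((grpRank H : ℝ) - 1) / (H.index : ℝ)}

/-- The `p`-rank: the largest `n` such that `G` surjects onto `(C_p)^n`. -/
noncomputable def pRank (p : ℕ) (G : Type*) [Group G] : ℕ :=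
  sSup {n : ℕ | ∃ f : G →* (Fin n → Multiplicative (ZMod p)), Function.Surjective f}

/-- The `p`-rank gradient. -/
noncomputable def RGp (p : ℕ) (G : Type*) [Group G] : ℝ :=
  sInf {x : ℝ | ∃ H : Subgroup G, H.Normal ∧ H.index ≠ 0 ∧
    x = ((pRank p H : ℝ) - 1) / (H.index : ℝ)}

/-- `G` is large: some finite index subgroup surjects onto a free group of rank 2. -/
def Large (G : Type*) [Group G] : Prop :=
  ∃ H : Subgroup G, H.index ≠ 0 ∧ ∃ f : H →* FreeGroup (Fin 2), Function.Surjective f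

/-- The first Betti number: the largest `n` such that `G` surjects onto `ℤ^n`. -/
noncomputable def firstBetti (G : Type*) [Group G] : ℕ :=
  sSup {n : ℕ | ∃ f : G →* Multiplicative (Fin n → ℤ), Function.Surjective f}

/-- The order of the image of `x` in `G ⧸ H`, as an extended natural number. -/
noncomputable def orderInE (H : Subgroup G) (x : G) : ℕ∞ :=
  if orderIn H x = 0 then ⊤ else (orderIn H x : ℕ∞)

/-- `ν(g; G, K)` from the paper, valued in `ℕ∞`. -/
noncomputable def nu (K : Subgroup G) (g : G) : ℕ∞ :=
  if g ∈ K then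
    sSup ((fun a : G => orderInE K a) '' {a : G | ∃ n : ℤ, a ^ n = g})
  else
    sSup ((fun q : G × ℤ => (q.2.natAbs : ℕ∞)) '' {q : G × ℤ | q.2 ≠ 0 ∧ q.1 ^ q.2 = g})

/-- The relative size `ν(g;G,K)⁻¹` of an element (`0` if `ν` is infinite). -/
noncomputable def relsizeElem (K : Subgroup G) (g : G) : ℝ :=
  (((nu K g).toNat : ℝ))⁻¹

/-- The relative size of a finite set. -/
noncomputable def relsizeFinset (K : Subgroup G) (S : Finset G) : ℝ :=
  ∑ g ∈ S, relsizeElem K g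

/-- The relative size of a normal subgroup `M`, finitely generated as a normal subgroup. -/
noncomputable def relsizeSubgroup (K M : Subgroup G) : ℝ :=
  sInf {x : ℝ | ∃ S : Finset G, Subgroup.normalClosure (S : Set G) = M ∧
    x = relsizeFinset K S}

/-- `a` is a minimal root of `g` in `G` with respect to `K`. -/
def IsMinimalRoot (K : Subgroup G) (g a : G) : Prop :=
  (g ∈ K ∧ (∃ n : ℤ, a ^ n = g) ∧ ((orderIn K a : ℕ∞) = nu K g)) ∨
  (g ∉ K ∧ ∃ m : ℕ, (m : ℕ∞) = nu K g ∧ a ^ m = g)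

/-! ### Roots in free groups -/

/-- The reduced word of `v ^ k` contains `k` copies of the non-empty cyclic reduction of `v`. -/
lemma length_le_norm_pow {α : Type*} [DecidableEq α] {v : FreeGroup α} (hv : v ≠ 1) (k : ℕ) :
    k ≤ (v ^ k).norm := by
  rcases Nat.eq_zero_or_pos k with rfl | hk
  · simp
  have hc : FreeGroup.reduceCyclically v.toWord ≠ [] := by
    intro h
    have := FreeGroup.reduceCyclically.conj_conjugator_reduceCyclically v.toWord
    rw [h] at this
    apply hv
    rw [← FreeGroup.mk_toWord (x := v), ← this, List.append_nil, ← FreeGroup.mul_mk,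
      ← FreeGroup.inv_mk, mul_inv_cancel]
  have hl := List.length_pos_iff.2 hc
  rw [FreeGroup.norm, FreeGroup.toWord_pow,
    FreeGroup.reduceCyclically.reduce_flatten_replicate FreeGroup.isReduced_toWord, if_neg hk.ne']
  simp only [List.length_append, List.length_flatten, List.map_replicate, List.sum_replicate,
    smul_eq_mul]
  nlinarith

/-- A non-trivial element of a free group is a positive power of an element which is not a proper
power: take the largest exponent, bounded by the word length thanks to `length_le_norm_pow`. -/
lemma exists_root {α : Type*} {w : FreeGroup α} (hw : w ≠ 1) :
    ∃ (v : FreeGroup α) (j : ℕ), 1 ≤ j ∧ NotProperPower v ∧ w = v ^ j := by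
  have hne : ∀ (v : FreeGroup α) (k : ℕ), w = v ^ k → v ≠ 1 := by
    rintro v k h rfl
    simp [hw] at h
  have hb : ∀ k, (∃ v, w = v ^ k) → k ≤ w.norm := by
    rintro k ⟨v, h⟩
    have := length_le_norm_pow (hne v k h) k
    rwa [← h] at this
  have h1 : ∃ v : FreeGroup α, w = v ^ 1 := ⟨w, by simp⟩
  have hw1 : 1 ≤ w.norm := hb 1 h1
  obtain ⟨v, hv⟩ := Nat.findGreatest_spec (P := fun k => ∃ v, w = v ^ k) hw1 h1
  have hj := Nat.le_findGreatest (P := fun k => ∃ v, w = v ^ k) hw1 h1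
  set j := Nat.findGreatest (fun k => ∃ v, w = v ^ k) w.norm
  refine ⟨v, j, hj, fun y k hy => ?_, hv⟩
  have hk0 : k ≠ 0 := by
    rintro rfl
    exact hne v j hv (by simpa using hy)
  have hyk : w = y ^ (k * j) := by rw [pow_mul, ← hy, hv]
  have := Nat.le_findGreatest (P := fun k => ∃ v, w = v ^ k) (hb _ ⟨y, hyk⟩) ⟨y, hyk⟩
  change k * j ≤ j at this
  have : k ≤ 1 := by nlinarith
  omega

/-! ### Orders modulo a subgroup and the finite residual -/

lemma orderIn_pos {K : Subgroup G} {x : G} {k : ℕ} (hk : 0 < k) (h : x ^ k ∈ K) :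
    0 < orderIn K x ∧ x ^ orderIn K x ∈ K :=
  Nat.sInf_mem (s := {j : ℕ | 0 < j ∧ x ^ j ∈ K}) ⟨k, hk, h⟩

lemma orderIn_le {K : Subgroup G} {x : G} {k : ℕ} (hk : 0 < k) (h : x ^ k ∈ K) :
    orderIn K x ≤ k :=
  Nat.sInf_le (s := {j : ℕ | 0 < j ∧ x ^ j ∈ K}) ⟨hk, h⟩

lemma orderIn_inv (K : Subgroup G) (x : G) : orderIn K x⁻¹ = orderIn K x := by
  simp [orderIn]

lemma orderIn_pow_le {K : Subgroup G} {b : G} {j e : ℕ} (he : 0 < e) (h : b ^ e ∈ K) :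
    orderIn K (b ^ j) ≤ orderIn K b := by
  obtain ⟨h0, h1⟩ := orderIn_pos he h
  refine orderIn_le h0 ?_
  rw [← pow_mul, mul_comm, pow_mul]
  exact K.pow_mem h1 j

lemma mem_finiteResidual {g : G} :
    g ∈ finiteResidual G ↔ ∀ L : Subgroup G, L.index ≠ 0 → g ∈ L := by
  simp [finiteResidual, Subgroup.mem_iInf]

instance finiteResidual_normal : (finiteResidual G).Normal where
  conj_mem g hg h := by
    rw [mem_finiteResidual] at hg ⊢
    intro L hL
    have := hg (L.comap (MulAut.conj h).toMonoidHom) (by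
      rwa [Subgroup.index_comap_of_surjective _ (MulAut.conj h).surjective])
    simpa using this

/-- For `H ≤ R_G` the finite residual of `G ⧸ H` is `R_G / H`: every finite index subgroup of `G`
contains `H`, so finite index subgroups of `G` and of `G ⧸ H` correspond. -/
lemma mk_mem_finiteResidual {H : Subgroup G} [H.Normal] (hH : H ≤ finiteResidual G) (g : G) :
    (QuotientGroup.mk' H g) ∈ finiteResidual (G ⧸ H) ↔ g ∈ finiteResidual G := by
  simp only [mem_finiteResidual]
  constructor
  · intro h L hL
    have hle : H ≤ L := fun x hx => mem_finiteResidual.1 (hH hx) L hL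
    have hs := QuotientGroup.mk'_surjective H
    have hc : (L.map (QuotientGroup.mk' H)).comap (QuotientGroup.mk' H) = L := by
      rw [Subgroup.comap_map_eq, QuotientGroup.ker_mk', sup_eq_left.2 hle]
    have hi : (L.map (QuotientGroup.mk' H)).index ≠ 0 := by
      rwa [← Subgroup.index_comap_of_surjective _ hs, hc]
    have := h _ hi
    rwa [← Subgroup.mem_comap, hc] at this
  · intro h L hL
    exact h (L.comap (QuotientGroup.mk' H)) (by
      rwa [Subgroup.index_comap_of_surjective _ (QuotientGroup.mk'_surjective H)])

lemma orderIn_mk {H : Subgroup G} [H.Normal] (hH : H ≤ finiteResidual G) (g : G) :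
    orderIn (finiteResidual (G ⧸ H)) (QuotientGroup.mk' H g) = orderIn (finiteResidual G) g := by
  simp only [orderIn, ← map_pow, mk_mem_finiteResidual hH]

/-- Finitely many elements outside the finite residual survive in a common finite quotient. -/
lemma exists_finite_quotient (T : Finset G) (hT : ∀ g ∈ T, g ∉ finiteResidual G) :
    ∃ N : Subgroup G, N.Normal ∧ N.FiniteIndex ∧ ∀ g ∈ T, g ∉ N := by
  induction T using Finset.induction_on with
  | empty => exact ⟨⊤, inferInstance, inferInstance, by simp⟩
  | insert a T _ ih =>
    obtain ⟨N, hN, hf, hd⟩ := ih fun g hg => hT g (Finset.mem_insert_of_mem hg)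
    have ha := hT a (Finset.mem_insert_self a T)
    rw [mem_finiteResidual] at ha
    push Not at ha
    obtain ⟨L, hL, haL⟩ := ha
    have : L.FiniteIndex := ⟨hL⟩
    refine ⟨N ⊓ L.normalCore, inferInstance, inferInstance, fun g hg hgN => ?_⟩
    rcases Finset.mem_insert.1 hg with rfl | hg
    · exact haL (L.normalCore_le hgN.2)
    · exact hd g hg hgN.1

/-- For `1 ≠ g ∈ K`, some root of `g` has inverse order modulo `K` within `ε` of the relative size of
`g`. If `ν(g)` is finite the supremum defining it is attained; if it is infinite, there are roots of
arbitrarily large finite order and the relative size is the value `0`. -/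
lemma exists_approx_root {K : Subgroup G} {g : G} (hg : g ∈ K) (hg1 : g ≠ 1) {ε : ℝ}
    (hε : 0 < ε) : ∃ (a : G) (e : ℕ), 0 < e ∧ a ^ e = g ∧
      ((orderIn K a : ℝ))⁻¹ ≤ relsizeElem K g + ε := by
  have hpos : ∀ (a : G) (e : ℤ), a ^ e = g → ∃ (b : G) (k : ℕ), 0 < k ∧ b ^ k = g ∧
      orderIn K b = orderIn K a := by
    intro a e h
    obtain ⟨k, rfl | rfl⟩ := e.eq_nat_or_neg
    · exact ⟨a, k, Nat.pos_of_ne_zero (by rintro rfl; simp at h; exact hg1 h.symm),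
        by simpa using h, rfl⟩
    · exact ⟨a⁻¹, k, Nat.pos_of_ne_zero (by rintro rfl; simp at h; exact hg1 h.symm),
        by simpa using h, orderIn_inv K a⟩
  have hE : ∀ (a : G) (e : ℤ), a ^ e = g → orderInE K a = (orderIn K a : ℕ∞) := by
    intro a e h
    obtain ⟨b, k, hk, hb, hab⟩ := hpos a e h
    rw [orderInE, if_neg]
    rw [← hab]
    exact (orderIn_pos hk (hb ▸ hg)).1.ne'
  have hnu : nu K g = sSup ((fun a : G => orderInE K a) '' {a : G | ∃ n : ℤ, a ^ n = g}) := by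
    rw [nu, if_pos hg]
  by_cases htop : nu K g = ⊤
  · obtain ⟨M, hM⟩ := exists_nat_gt ε⁻¹
    have hlt : (M : ℕ∞) < sSup ((fun a : G => orderInE K a) '' {a : G | ∃ n : ℤ, a ^ n = g}) := by
      rw [← hnu, htop]
      exact ENat.natCast_lt_top M
    obtain ⟨_, ⟨a, ⟨e, he⟩, rfl⟩, hMa⟩ := lt_sSup_iff.1 hlt
    simp only [hE a e he, Nat.cast_lt] at hMa
    obtain ⟨b, k, hk, hb, hab⟩ := hpos a e he
    refine ⟨b, k, hk, hb, ?_⟩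
    have : ((orderIn K a : ℝ))⁻¹ ≤ ε := by
      apply inv_le_of_inv_le₀ hε
      have : (M : ℝ) < orderIn K a := by exact_mod_cast hMa
      linarith
    simpa [relsizeElem, htop, hab] using this
  · have : Nonempty ((fun a : G => orderInE K a) '' {a : G | ∃ n : ℤ, a ^ n = g}) :=
      ⟨_, g, ⟨1, by simp⟩, rfl⟩
    have hmem := ENat.sSup_mem_of_nonempty_of_lt_top
      (s := (fun a : G => orderInE K a) '' {a : G | ∃ n : ℤ, a ^ n = g})
      (by rw [← hnu]; exact lt_top_iff_ne_top.2 htop)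
    rw [← hnu] at hmem
    obtain ⟨a, ⟨e, he⟩, ha⟩ := hmem
    simp only [hE a e he] at ha
    obtain ⟨b, k, hk, hb, hab⟩ := hpos a e he
    refine ⟨b, k, hk, hb, ?_⟩
    rw [relsizeElem, ← ha, hab]
    simp [hε.le]

/-- Derivations `FreeGroup α → V` with prescribed values on the generators, in a linear family over
`M`: the values are linear maps `M → V`, so that for each `f : M` the map `g ↦ D g f` is a
derivation with value `p i f` at `FreeGroup.of i`. -/
lemma exists_derivation {α V M : Type*} [AddCommGroup V] [Module ℚ V] [AddCommGroup M] [Module ℚ M]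
    (ρ : FreeGroup α →* Module.End ℚ V) (p : α → M →ₗ[ℚ] V) :
    ∃ D : FreeGroup α → M →ₗ[ℚ] V,
      (∀ g h f, D (g * h) f = D g f + ρ g (D h f)) ∧ ∀ i, D (FreeGroup.of i) = p i := by
  have hinv : ∀ g v, ρ g (ρ g⁻¹ v) = v := fun g v => by
    rw [← Module.End.mul_apply, ← map_mul]; simp
  have hinv' : ∀ g v, ρ g⁻¹ (ρ g v) = v := fun g v => by
    rw [← Module.End.mul_apply, ← map_mul]; simp
  -- The generator `i` acts on `M →ₗ V` by the affine map `v ↦ p i + ρ (of i) ∘ v`; the orbit of `0`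
  -- under the resulting action of the free group is the derivation.
  let e : α → Equiv.Perm (M →ₗ[ℚ] V) := fun i =>
    { toFun := fun v => p i + ρ (FreeGroup.of i) ∘ₗ v
      invFun := fun v => ρ (FreeGroup.of i)⁻¹ ∘ₗ (v - p i)
      left_inv := fun v => by ext x; simp [hinv']
      right_inv := fun v => by ext x; simp [hinv] }
  let L := FreeGroup.lift e
  have key : ∀ g v, L g v = L g 0 + ρ g ∘ₗ v := by
    intro g
    induction g using FreeGroup.induction_on with
    | C1 => intro v; ext; simp
    | of i => intro v; simp [L, e]
    | inv_of i _ =>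
      intro v
      simp only [L, map_inv, FreeGroup.lift_apply_of]
      ext x
      change ρ (FreeGroup.of i)⁻¹ (v x - p i x) = ρ (FreeGroup.of i)⁻¹ (0 - p i x) + _
      simp
      abel
    | mul x y hx hy =>
      intro v
      rw [map_mul, Equiv.Perm.mul_apply, Equiv.Perm.mul_apply, hx, hy, hx (L y 0), map_mul]
      ext z
      simp [add_assoc]
  refine ⟨fun g => L g 0, fun g h f => ?_, fun i => ?_⟩
  · simp only [map_mul, Equiv.Perm.mul_apply]
    rw [key]
    rfl
  · simp [L, e]

/-! ### The upper bound for values of presentations -/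

lemma card_quotient_zpowers_le {Q : Type*} [Group Q] [Finite Q] {q : Q} {k : ℕ} (hk : 0 < k)
    (h : k ≤ orderOf q) :
    (Nat.card (Q ⧸ Subgroup.zpowers q) : ℝ) ≤ Nat.card Q * (k : ℝ)⁻¹ := by
  have h1 := Subgroup.card_eq_card_quotient_mul_card_subgroup (Subgroup.zpowers q)
  rw [Nat.card_zpowers] at h1
  have hk' : (0 : ℝ) < k := by exact_mod_cast hk
  rw [← div_eq_mul_inv, le_div_iff₀ hk', h1]
  push_cast
  gcongr

/-- If `d` elements generate `G`, every presentation has value at most `d`. Over a finite quotient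
`Q = G ⧸ N` in which the images of the `u i` have order at least `k i`, take `V = Q → ℚ`. A
derivation `F_n → V` is determined by its values on lifts of the `d` generators and on the relators
`u i ^ m i`; the latter values are functions invariant under right translation by the image of
`u i`, so they live in a space of dimension at most `|Q| / k i`. As derivations on `F_n` form a
space of dimension `n|Q|`, the bound follows by counting dimensions. -/
lemma value_le {n s d : ℕ} (u : Fin s → FreeGroup (Fin n)) (m : Fin s → ℕ)
    (φ : FreeGroup (Fin n) →* G) (hm : ∀ i, 1 ≤ m i) (hφ : Function.Surjective φ)
    (hker : φ.ker = Subgroup.normalClosure (Set.range fun i => u i ^ m i))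
    (t : Fin d → G) (ht : Subgroup.closure (Set.range t) = ⊤) :
    (n : ℝ) - ∑ i, ((orderIn (finiteResidual G) (φ (u i)) : ℝ))⁻¹ ≤ d := by
  set k : Fin s → ℕ := fun i => orderIn (finiteResidual G) (φ (u i)) with hk
  have hrel : ∀ i, φ (u i) ^ m i = 1 := fun i => by
    rw [← map_pow, ← MonoidHom.mem_ker, hker]
    exact Subgroup.subset_normalClosure ⟨i, rfl⟩
  have hk0 : ∀ i, 0 < k i := fun i =>
    (orderIn_pos (hm i) (by rw [hrel i]; exact one_mem _)).1
  obtain ⟨N, hN, hNf, hNd⟩ := exists_finite_quotient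
    (Finset.univ.biUnion fun i => (Finset.Ioo 0 (k i)).image fun j => φ (u i) ^ j) (by
      intro g hg hgR
      simp only [Finset.mem_biUnion, Finset.mem_univ, true_and, Finset.mem_image,
        Finset.mem_Ioo] at hg
      obtain ⟨i, j, ⟨hj0, hj⟩, rfl⟩ := hg
      exact absurd (orderIn_le hj0 hgR) (not_le.2 hj))
  have : Finite (G ⧸ N) := Subgroup.finite_quotient_of_finiteIndex
  have : Fintype (G ⧸ N) := Fintype.ofFinite _
  let π := QuotientGroup.mk' N
  have hord : ∀ i, k i ≤ orderOf (π (φ (u i))) := by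
    intro i
    by_contra! hlt
    have hp := orderOf_pos (π (φ (u i)))
    have h1 := pow_orderOf_eq_one (π (φ (u i)))
    rw [← map_pow] at h1
    refine hNd _ ?_ ((QuotientGroup.eq_one_iff _).1 h1)
    simp only [Finset.mem_biUnion, Finset.mem_univ, true_and, Finset.mem_image, Finset.mem_Ioo]
    exact ⟨i, _, ⟨hp, hlt⟩, rfl⟩
  -- `Q` acts on functions `Q → ℚ` by right translation.
  let ρ₀ : (G ⧸ N) →* Module.End ℚ ((G ⧸ N) → ℚ) :=
    { toFun := fun q => LinearMap.funLeft ℚ ℚ (fun x => x * q)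
      map_one' := by ext; simp [LinearMap.funLeft_apply]
      map_mul' := fun a b => by
        ext f x
        simp [LinearMap.funLeft_apply, mul_assoc] }
  let ρ := ρ₀.comp (π.comp φ)
  have hρ : ∀ g f x, ρ g f x = f (x * π (φ g)) := fun g f x => rfl
  have hρrel : ∀ i, ρ (u i ^ m i) = 1 := fun i => by
    change ρ₀ (π (φ (u i ^ m i))) = 1
    rw [map_pow φ, hrel, map_one, map_one]
  obtain ⟨D, hD, hDi⟩ := exists_derivation ρ
    (fun i : Fin n => (LinearMap.proj i : (Fin n → (G ⧸ N) → ℚ) →ₗ[ℚ] ((G ⧸ N) → ℚ)))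
  have hD1 : ∀ f, D 1 f = 0 := fun f => by
    have := hD 1 1 f
    simpa using this
  -- Since `u ^ m` commutes with `u` and acts trivially, expanding `D (u ^ m * u) = D (u * u ^ m)`
  -- shows that `D (u ^ m) f` is fixed by `u`.
  have hfix : ∀ i f x, D (u i ^ m i) f (x * π (φ (u i))) = D (u i ^ m i) f x := by
    intro i f x
    have h1 := hD (u i ^ m i) (u i) f
    have h2 := hD (u i) (u i ^ m i) f
    rw [← pow_succ, pow_succ'] at h1
    rw [h2, hρrel] at h1
    have h4 : ρ (u i) (D (u i ^ m i) f) = D (u i ^ m i) f := by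
      rw [Module.End.one_apply, add_comm] at h1
      exact add_right_cancel h1
    exact (hρ (u i) _ x).symm.trans (congrFun h4 x)
  have hfix' : ∀ i f (x : G ⧸ N), D (u i ^ m i) f
      (Quotient.out (x : (G ⧸ N) ⧸ Subgroup.zpowers (π (φ (u i))))) = D (u i ^ m i) f x := by
    intro i f x
    obtain ⟨⟨y, hy⟩, hxy⟩ := QuotientGroup.mk_out_eq_mul (Subgroup.zpowers (π (φ (u i)))) x
    rw [hxy]
    have : y ∈ Submonoid.powers (π (φ (u i))) := by rwa [mem_powers_iff_mem_zpowers]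
    obtain ⟨j, rfl⟩ := this
    change D (u i ^ m i) f (x * π (φ (u i)) ^ j) = _
    clear hxy hy
    induction j with
    | zero => simp
    | succ j ih => rw [pow_succ, ← mul_assoc, hfix, ih]
  -- `Quotient.out` restricts a function to coset representatives; on functions invariant under
  -- `⟨u i⟩`, such as `D (u i ^ m i) f`, this loses nothing.
  choose w hw using fun j => hφ (t j)
  let Φ : (Fin n → (G ⧸ N) → ℚ) →ₗ[ℚ]
      (Fin d → (G ⧸ N) → ℚ) × (∀ i, ((G ⧸ N) ⧸ Subgroup.zpowers (π (φ (u i)))) → ℚ) :=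
    LinearMap.prod (LinearMap.pi fun j => D (w j))
      (LinearMap.pi fun i => LinearMap.funLeft ℚ ℚ Quotient.out ∘ₗ D (u i ^ m i))
  have hinj : Function.Injective Φ := by
    rw [injective_iff_map_eq_zero]
    intro f hf
    have hfw : ∀ j, D (w j) f = 0 := fun j => congrFun (congrArg Prod.fst hf) j
    have hfu : ∀ i, D (u i ^ m i) f = 0 := fun i => by
      funext x
      rw [← hfix']
      exact congrFun (congrFun (congrArg Prod.snd hf) i) _
    let K : Subgroup (FreeGroup (Fin n)) :=
      { carrier := {g | D g f = 0}
        one_mem' := hD1 f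
        mul_mem' := fun {a b} ha hb => by
          simp only [Set.mem_ofPred_eq] at *
          rw [hD, ha, hb]; simp
        inv_mem' := fun {a} ha => by
          simp only [Set.mem_ofPred_eq] at *
          have := hD a⁻¹ a f
          rw [ha, inv_mul_cancel, hD1] at this
          simpa using this.symm }
    have hK : ∀ g, g ∈ K ↔ D g f = 0 := fun g => Iff.rfl
    -- Where the action is trivial, a derivation restricts to a homomorphism whose kernel is normal.
    have hnor : (K ⊓ ρ.ker).Normal := ⟨fun g hg h => ⟨by
      have h1 := (hK g).1 hg.1
      have h2 : ρ g = 1 := hg.2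
      change D (h * g * h⁻¹) f = 0
      rw [hD, hD, h1, map_mul, h2, mul_one, map_zero, add_zero, ← hD, mul_inv_cancel, hD1],
      ρ.normal_ker.conj_mem g hg.2 h⟩⟩
    have hkK : φ.ker ≤ K := by
      rw [hker]
      refine (Subgroup.normalClosure_le_normal ?_).trans (inf_le_left (b := ρ.ker))
      rintro _ ⟨i, rfl⟩
      exact ⟨hfu i, hρrel i⟩
    have htop : K.map φ = ⊤ := by
      rw [eq_top_iff, ← ht, Subgroup.closure_le]
      rintro _ ⟨j, rfl⟩
      exact ⟨w j, hfw j, hw j⟩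
    have hKtop : K = ⊤ := by
      have := Subgroup.comap_map_eq φ K
      rw [htop, Subgroup.comap_top, sup_eq_left.2 hkK] at this
      exact this.symm
    funext i
    have : FreeGroup.of i ∈ K := hKtop ▸ Subgroup.mem_top _
    rw [hK, hDi] at this
    exact this
  have hrank := LinearMap.finrank_le_finrank_of_injective hinj
  simp only [Module.finrank_prod, Module.finrank_pi_fintype, Module.finrank_self, mul_one, Finset.sum_const, Finset.card_univ,
    Fintype.card_fin, smul_eq_mul] at hrank
  have hrank' : (n : ℝ) * Nat.card (G ⧸ N) ≤ d * Nat.card (G ⧸ N) +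
      ∑ i, (Nat.card (G ⧸ N) : ℝ) * (k i : ℝ)⁻¹ := by
    calc (n : ℝ) * Nat.card (G ⧸ N) ≤ d * Nat.card (G ⧸ N) +
          ∑ i, (Nat.card ((G ⧸ N) ⧸ Subgroup.zpowers (π (φ (u i)))) : ℝ) := by
          simp only [Nat.card_eq_fintype_card]
          exact_mod_cast hrank
      _ ≤ _ := by
          gcongr with i
          exact card_quotient_zpowers_le (hk0 i) (hord i)
  have hc : (0 : ℝ) < Nat.card (G ⧸ N) := by exact_mod_cast Nat.card_pos
  rw [← Finset.mul_sum] at hrank'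
  have : (Nat.card (G ⧸ N) : ℝ) * (n - ∑ i, (k i : ℝ)⁻¹) ≤ Nat.card (G ⧸ N) * d := by linarith
  exact le_of_mul_le_mul_left this hc

/-! ### Presentations of `G` and of `G ⧸ H` -/

/-- The set of residual deficiencies of finite presentations of `G`, whose supremum is `rdef G`. -/
def rdefSet (G : Type*) [Group G] : Set ℝ :=
  {x : ℝ | ∃ (n s : ℕ) (u : Fin s → FreeGroup (Fin n)) (m : Fin s → ℕ)
    (φ : FreeGroup (Fin n) →* G),
    (∀ i, 1 ≤ m i) ∧ (∀ i, NotProperPower (u i)) ∧ Function.Surjective φ ∧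
    φ.ker = Subgroup.normalClosure (Set.range fun i => u i ^ m i) ∧
    x = (n : ℝ) - ∑ i, ((orderIn (finiteResidual G) (φ (u i)) : ℝ))⁻¹}

lemma bddAbove_rdefSet {d : ℕ} {θ : FreeGroup (Fin d) →* G} (hθ : Function.Surjective θ) :
    BddAbove (rdefSet G) := by
  refine ⟨d, ?_⟩
  rintro x ⟨n, s, u, m, φ, hm, -, hφ, hker, rfl⟩
  refine value_le u m φ hm hφ hker (fun i => θ (FreeGroup.of i)) ?_
  rw [show (fun i => θ (FreeGroup.of i)) = θ ∘ FreeGroup.of from rfl, Set.range_comp,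
    ← MonoidHom.map_closure, FreeGroup.closure_range_of, ← MonoidHom.range_eq_map]
  exact MonoidHom.range_eq_top.2 hθ

/-- Discard the trivial relators of a finite presentation and extract roots of the others. -/
lemma rdefSet_nonempty (hG : FinitelyPresentedGroup G) : (rdefSet G).Nonempty := by
  obtain ⟨n, R, φ, hφ, hker⟩ := hG
  let R' := R.filter (· ≠ 1)
  have hr : ∀ i : Fin R'.card, ∃ (v : FreeGroup (Fin n)) (j : ℕ),
      1 ≤ j ∧ NotProperPower v ∧ (R'.equivFin.symm i : FreeGroup (Fin n)) = v ^ j := fun i =>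
    exists_root (Finset.mem_filter.1 (R'.equivFin.symm i).2).2
  choose u m hm hu hum using hr
  refine ⟨_, n, R'.card, u, m, φ, hm, hu, hφ, ?_, rfl⟩
  have hrange : (Set.range fun i => u i ^ m i) = (R' : Set (FreeGroup (Fin n))) := by
    simp only [← hum]
    ext x
    constructor
    · rintro ⟨i, rfl⟩
      exact (R'.equivFin.symm i).2
    · intro hx
      exact ⟨R'.equivFin ⟨x, hx⟩, by simp⟩
  rw [hker, hrange]
  refine le_antisymm (Subgroup.normalClosure_le_normal fun x hx => ?_)
    (Subgroup.normalClosure_mono fun x hx => (Finset.mem_filter.1 hx).1)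
  by_cases h : x = 1
  · exact h ▸ one_mem _
  · exact Subgroup.subset_normalClosure (Finset.mem_filter.2 ⟨hx, h⟩)

/-- Adding to a presentation of `G` relators which represent the `s i` gives a presentation of the
quotient by their normal closure. Lifting almost optimal roots of the `s i` to the free group, and
replacing these lifts by roots which are not proper powers, makes each new relator cost at most
`relsizeElem (s i) + ε`; the old relators keep their cost because `H ≤ R_G`. -/
lemma exists_mem_rdefSet_quotient {m : ℕ} {s : Fin m → G} (hs1 : ∀ i, s i ≠ 1)
    (hsR : ∀ i, s i ∈ finiteResidual G) {x : ℝ} (hx : x ∈ rdefSet G) {ε : ℝ} (hε : 0 < ε) :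
    ∃ y ∈ rdefSet (G ⧸ Subgroup.normalClosure (Set.range s)),
      x - ∑ i, (relsizeElem (finiteResidual G) (s i) + ε) ≤ y := by
  obtain ⟨n, r, u, k, φ, hk, hu, hφ, hker, rfl⟩ := hx
  set H := Subgroup.normalClosure (Set.range s) with hH
  have hHR : H ≤ finiteResidual G := Subgroup.normalClosure_le_normal (by
    rintro _ ⟨i, rfl⟩
    exact hsR i)
  have hroot : ∀ i, ∃ (v : FreeGroup (Fin n)) (e : ℕ), 1 ≤ e ∧ NotProperPower v ∧
      φ (v ^ e) = s i ∧ ((orderIn (finiteResidual G) (φ v) : ℝ))⁻¹ ≤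
        relsizeElem (finiteResidual G) (s i) + ε := by
    intro i
    obtain ⟨a, e, he, hae, ha⟩ := exists_approx_root (hsR i) (hs1 i) hε
    obtain ⟨w, rfl⟩ := hφ a
    have hw : w ≠ 1 := by
      rintro rfl
      simp at hae
      exact hs1 i hae.symm
    obtain ⟨v, j, hj, hv, rfl⟩ := exists_root hw
    refine ⟨v, j * e, Nat.mul_pos hj he, hv, ?_, le_trans ?_ ha⟩
    · rw [pow_mul, map_pow, hae]
    · have hmem : φ v ^ (j * e) ∈ finiteResidual G := by
        rw [pow_mul, ← map_pow, hae]
        exact hsR i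
      have hpos : 0 < orderIn (finiteResidual G) (φ (v ^ j)) :=
        (orderIn_pos he (hae ▸ hsR i)).1
      have hle : orderIn (finiteResidual G) (φ (v ^ j)) ≤ orderIn (finiteResidual G) (φ v) := by
        rw [map_pow]
        exact orderIn_pow_le (Nat.mul_pos hj he) hmem
      gcongr
  choose v e he hv hve hvo using hroot
  have hord : ∀ g, orderIn (finiteResidual (G ⧸ Subgroup.normalClosure (Set.range s)))
      (QuotientGroup.mk' H g) = orderIn (finiteResidual G) g := orderIn_mk hHR
  have hs := QuotientGroup.mk'_surjective H
  refine ⟨_, ⟨n, r + m, Fin.append u v, Fin.append k e, (QuotientGroup.mk' H).comp φ, ?_, ?_,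
    hs.comp hφ, ?_, rfl⟩, ?_⟩
  · exact fun i => Fin.addCases (by simpa using hk) (by simpa using he) i
  · exact fun i => Fin.addCases (by simpa using hu) (by simpa using hv) i
  · have hrange : (Set.range fun i => Fin.append u v i ^ Fin.append k e i) =
        (Set.range fun i => v i ^ e i) ∪ Set.range fun i => u i ^ k i := by
      ext z
      constructor
      · rintro ⟨i, rfl⟩
        refine Fin.addCases (fun i => Or.inr ⟨i, by simp⟩) (fun i => Or.inl ⟨i, by simp⟩) i
      · rintro (⟨i, rfl⟩ | ⟨i, rfl⟩)
        · exact ⟨Fin.natAdd r i, by simp⟩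
        · exact ⟨Fin.castAdd m i, by simp⟩
    have hmap : H = (Subgroup.normalClosure (Set.range fun i => v i ^ e i)).map φ := by
      rw [Subgroup.map_normalClosure _ _ hφ, ← Set.range_comp, hH]
      congr 2
      funext i
      exact (hve i).symm
    rw [hrange, Subgroup.normalClosure_union, ← hker, ← Subgroup.comap_map_eq, ← hmap,
      ← MonoidHom.comap_ker, QuotientGroup.ker_mk']
  · rw [Fin.sum_univ_add]
    simp only [Fin.append_left, Fin.append_right, MonoidHom.comp_apply, hord]
    have := Finset.sum_le_sum fun i (_ : i ∈ Finset.univ) => hvo i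
    linarith

/-- for non-trivial elements `s₁, …, s_m` of the (non-trivial) finite
residual, with `H` their normal closure, `rdef(G/H) ≥ rdef(G) − relsize(S;G,R_G)`. -/
theorem statement15 {G : Type*} [Group G] (hG : FinitelyPresentedGroup G)
    (hR : finiteResidual G ≠ ⊥) (m : ℕ) (s : Fin m → G)
    (hs1 : ∀ i, s i ≠ 1) (hsR : ∀ i, s i ∈ finiteResidual G) :
    rdef G - ∑ i, relsizeElem (finiteResidual G) (s i)
      ≤ rdef (G ⧸ Subgroup.normalClosure (Set.range s)) := by
  have hbound : ∀ x ∈ rdefSet G,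
      x ≤ rdef (G ⧸ Subgroup.normalClosure (Set.range s)) +
        ∑ i, relsizeElem (finiteResidual G) (s i) := by
    intro x hx
    obtain ⟨n, R, θ, hθ, -⟩ := id hG
    have hbdd : BddAbove (rdefSet (G ⧸ Subgroup.normalClosure (Set.range s))) :=
      bddAbove_rdefSet (θ := (QuotientGroup.mk' _).comp θ)
        ((QuotientGroup.mk'_surjective _).comp hθ)
    refine le_of_forall_pos_le_add fun δ hδ => ?_
    have hε : 0 < δ / (m + 1) := by positivity
    obtain ⟨y, hy, hxy⟩ := exists_mem_rdefSet_quotient hs1 hsR hx hε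
    have hy' : y ≤ rdef (G ⧸ Subgroup.normalClosure (Set.range s)) := le_csSup hbdd hy
    have hmδ : m * (δ / (m + 1)) ≤ δ := by
      rw [mul_div_assoc', div_le_iff₀ (by positivity)]
      nlinarith
    rw [Finset.sum_add_distrib, Finset.sum_const, Finset.card_univ, Fintype.card_fin,
      nsmul_eq_mul] at hxy
    linarith
  have : rdef G ≤ _ := csSup_le (rdefSet_nonempty hG) hbound
  linarith

end ResDef
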